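/- With the multipath routing state space M and best-response operator σ defined from a finite graph G with destination d and a strictly inflationary preorder ⪯ on the set 𝒫 of simple paths to d, there exists exactly one x ∈ M with σ(x) = x; that is, the multipath stable paths problem with strictly inflationary preferences has a unique stable path assignment. -/

import Mathlib

/-!
Whether a path `q` lies in `σ x` depends only on which paths below `q`, in the transitive closure of
the strict preference `≺`, lie in `x`: if `q` extends `p` then `p ≺ q`, and if a competitor `b ≺ q`
extends `p` then `p ≺ b ≺ q`. When `≺` is well-founded, the equation `σ x = x` is therefore a
definition of `x` by well-founded recursion, which has exactly one solution. Here `≺` is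
well-founded because a finite graph has only finitely many simple paths.
-/

/-- A simple path in the directed graph with vertex set `V` and arc relation `E`,
ending at the destination `dest`: a duplicate-free nonempty list of vertices,
consecutive vertices joined by arcs, whose last vertex is `dest`.  The empty path
`ε` at `dest` is represented by the list `[dest]`. -/
structure SimplePath (V : Type*) (E : V → V → Prop) (dest : V) where
  verts : List V
  ends : verts.getLast? = some dest
  nodup : verts.Nodup
  chain : verts.Chain' E

variable {V : Type*} {E : V → V → Prop} {dest : V}

/-- The candidate paths at node `i` given a state `x`: the simple paths of the
form `(i j) p` where `(i, j)` is an arc and `p ∈ x` is a path with source `j`. -/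
def cand (x : Set (SimplePath V E dest)) (i : V) : Set (SimplePath V E dest) :=
  {q | ∃ p ∈ x, ∃ j, p.verts.head? = some j ∧ E i j ∧ q.verts = i :: p.verts}

/-- The minimal (most preferred) elements of a set of paths, with respect to the
strict part `≺` of the preference preorder `⪯`:
`min A = {a ∈ A : no b ∈ A has b ≺ a}`. -/
def minSet {P : Type*} (pre : P → P → Prop) (A : Set P) : Set P :=
  {a | a ∈ A ∧ ∀ b ∈ A, ¬ (pre b a ∧ ¬ pre a b)}

/-- The myopic best-response operator on the multipath routing state space
(states are identified with sets of simple paths to `dest`): the component of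
`σ x` at `dest` is `{ε}`, and the component at `i ≠ dest` is the set of minimal
candidate paths at `i`. -/
def bestResp (pre : SimplePath V E dest → SimplePath V E dest → Prop)
    (x : Set (SimplePath V E dest)) : Set (SimplePath V E dest) :=
  {q | q.verts = [dest] ∨ ∃ i, i ≠ dest ∧ q ∈ minSet pre (cand x i)}

/-- The height of a path: `h p = |{q : p ⪯ q}|`, the number of paths that `p` is
weakly preferred to be below. -/
noncomputable def hval (pre : SimplePath V E dest → SimplePath V E dest → Prop)
    (p : SimplePath V E dest) : ℕ :=
  Nat.card {q : SimplePath V E dest // pre p q}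

/-- The ultrametric distance on states: the maximum of `h` over the symmetric
difference `(m \ n) ∪ (n \ m)` (equal to `0` when the symmetric difference is
empty). -/
noncomputable def pathDist (pre : SimplePath V E dest → SimplePath V E dest → Prop)
    (m n : Set (SimplePath V E dest)) : ℕ :=
  sSup (hval pre '' ((m \ n) ∪ (n \ m)))

/-- The preference preorder `⪯` is strictly inflationary: any simple path `p`
(from `j` to `dest`) is strictly preferred to any simple one-arc extension
`(i j) p` of it. -/
def StrictlyInflationary (pre : SimplePath V E dest → SimplePath V E dest → Prop) : Prop :=
  ∀ (p : SimplePath V E dest) (i j : V), p.verts.head? = some j → E i j →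
    ∀ q : SimplePath V E dest, q.verts = i :: p.verts → pre p q ∧ ¬ pre q p

theorem existsUnique_fixed_of_dependsOn {ι : Type*} {α : ι → Type*} [Nonempty (∀ i, α i)]
    {r : ι → ι → Prop} (hr : WellFounded r) {T : (∀ i, α i) → ∀ i, α i}
    (hT : ∀ i, DependsOn (fun x => T x i) {j | r j i}) : ∃! x, T x = x := by
  classical
  obtain ⟨x₀⟩ := ‹Nonempty (∀ i, α i)›
  -- By `hT`, the values of `x₀` outside the predecessors of `i` do not affect the result.
  let step (i : ι) (below : ∀ j, r j i → α j) : α i :=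
    T (fun j => if h : r j i then below j h else x₀ j) i
  have fix_eq_of_agree {i : ι} {x : ∀ i, α i} (hx : ∀ j, r j i → hr.fix step j = x j) :
      hr.fix step i = T x i := by
    rw [hr.fix_eq]
    exact hT i fun j hj => (dif_pos hj).trans (hx j hj)
  refine ⟨hr.fix step, funext fun i => (fix_eq_of_agree fun _ _ => rfl).symm, fun y hy => ?_⟩
  symm
  funext i
  induction i using hr.induction with
  | _ i ih => exact (fix_eq_of_agree ih).trans (congrFun hy i)

/-- The strict part `p ≺ q` of a preference relation `p ⪯ q`; it is the relation `<` of `Preorder`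
when `⪯` is a preorder. -/
def StrictPref {P : Type*} (pre : P → P → Prop) (p q : P) : Prop :=
  pre p q ∧ ¬ pre q p

theorem mem_minSet_congr {P : Type*} {pre : P → P → Prop} {A B : Set P} {a : P}
    (ha : a ∈ A ↔ a ∈ B) (hlt : ∀ b, StrictPref pre b a → (b ∈ A ↔ b ∈ B)) :
    a ∈ minSet pre A ↔ a ∈ minSet pre B :=
  and_congr ha <| forall_congr' fun b =>
    ⟨fun h hb hba => h ((hlt b hba).2 hb) hba, fun h hb hba => h ((hlt b hba).1 hb) hba⟩

theorem SimplePath.verts_injective :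
    Function.Injective (SimplePath.verts : SimplePath V E dest → List V) := by
  rintro ⟨_, _, _, _⟩ ⟨_, _, _, _⟩ rfl
  rfl

instance SimplePath.instFinite [Finite V] : Finite (SimplePath V E dest) := by
  classical
  have := Fintype.ofFinite V
  exact Finite.of_injective (fun p => (⟨p.verts, p.nodup⟩ : {l : List V // l.Nodup}))
    fun _ _ h => SimplePath.verts_injective (congrArg Subtype.val h)

section Locality

variable {pre : SimplePath V E dest → SimplePath V E dest → Prop}
  {x y : Set (SimplePath V E dest)} {q : SimplePath V E dest}

theorem mem_cand_congr (hinfl : StrictlyInflationary pre) {i : V}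
    (hxy : ∀ p, StrictPref pre p q → (p ∈ x ↔ p ∈ y)) : q ∈ cand x i ↔ q ∈ cand y i :=
  exists_congr fun p => and_congr_left fun ⟨j, hj, hij, hq⟩ => hxy p (hinfl p i j hj hij q hq)

theorem mem_bestResp_congr (hinfl : StrictlyInflationary pre)
    (hxy : ∀ p, Relation.TransGen (StrictPref pre) p q → (p ∈ x ↔ p ∈ y)) :
    q ∈ bestResp pre x ↔ q ∈ bestResp pre y := by
  have mem_minSet_cand (i : V) : q ∈ minSet pre (cand x i) ↔ q ∈ minSet pre (cand y i) :=
    mem_minSet_congr (mem_cand_congr hinfl fun p hpq => hxy p (.single hpq)) fun b hbq =>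
      mem_cand_congr hinfl fun p hpb => hxy p (.tail (.single hpb) hbq)
  exact or_congr_right <| exists_congr fun i => and_congr_right' (mem_minSet_cand i)

end Locality

theorem bestResp_unique_fixed_point_general
    {pre : SimplePath V E dest → SimplePath V E dest → Prop}
    (hwf : WellFounded (StrictPref pre)) (hinfl : StrictlyInflationary pre) :
    ∃! x : Set (SimplePath V E dest), bestResp pre x = x :=
  existsUnique_fixed_of_dependsOn (α := fun _ => Prop) hwf.transGen fun _ _ _ hxy =>
    propext <| mem_bestResp_congr hinfl fun p hp => Iff.of_eq (hxy p hp)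

/-- for a finite graph with destination `dest` and a strictly
inflationary preference preorder on the simple paths to `dest`, the best-response
operator has exactly one fixed point: the multipath stable paths problem with
strictly inflationary preferences has a unique stable path assignment. -/
theorem bestResp_unique_fixed_point {V : Type*} [Fintype V]
    {E : V → V → Prop} {dest : V}
    (pre : SimplePath V E dest → SimplePath V E dest → Prop)
    (hrefl : ∀ p, pre p p)
    (htrans : ∀ p q r, pre p q → pre q r → pre p r)
    (hinfl : StrictlyInflationary pre) :
    ∃! x : Set (SimplePath V E dest), bestResp pre x = x := by
  let _ : Preorder (SimplePath V E dest) := { le := pre, le_refl := hrefl, le_trans := htrans }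
  exact bestResp_unique_fixed_point_general wellFounded_lt hinfl
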